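/- Let P ⊆ ℝ^d be a d-dimensional simplicial reflexive polytope. Then the number of vertices of P is at most 3d if d is even, and at most 3d−1 if d is odd. -/

import Mathlib

noncomputable section

/-- The standard inner product on `ℝ^d`. -/
def dotp {d : ℕ} (x y : Fin d → ℝ) : ℝ := ∑ i, x i * y i

/-- `x` is a point of the lattice `ℤ^d`. -/
def IsLP {d : ℕ} (x : Fin d → ℝ) : Prop := ∀ i, ∃ n : ℤ, x i = (n : ℝ)

/-- A lattice polytope: convex hull of finitely many lattice points. -/
def IsLatticePolytope {d : ℕ} (P : Set (Fin d → ℝ)) : Prop :=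
  ∃ V : Finset (Fin d → ℝ), (∀ v ∈ V, IsLP v) ∧ P = convexHull ℝ (V : Set (Fin d → ℝ))

/-- The dual polytope `P* = {x | ⟨x,y⟩ ≤ 1 ∀ y ∈ P}`. -/
def dualPolytope {d : ℕ} (P : Set (Fin d → ℝ)) : Set (Fin d → ℝ) :=
  {x | ∀ y ∈ P, dotp x y ≤ 1}

/-- `P` is a reflexive polytope: a (`d`-dimensional) lattice polytope with `0` in its
interior whose dual is again a lattice polytope. -/
def IsReflexive {d : ℕ} (P : Set (Fin d → ℝ)) : Prop :=
  IsLatticePolytope P ∧ (0 : Fin d → ℝ) ∈ interior P ∧ IsLatticePolytope (dualPolytope P)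

/-- `F` is a facet of `P` with (uniquely determined) outer normal `u`, normalized by
`⟨u, F⟩ = 1` (possible since `0` is in the interior of `P`). -/
def IsFacetNormal {d : ℕ} (P F : Set (Fin d → ℝ)) (u : Fin d → ℝ) : Prop :=
  F.Nonempty ∧ (∀ y ∈ P, dotp u y ≤ 1) ∧ F = {y ∈ P | dotp u y = 1} ∧
    Module.finrank ℝ (vectorSpan ℝ F) = d - 1

/-- `F` is a facet of `P`. -/
def IsFacet {d : ℕ} (P F : Set (Fin d → ℝ)) : Prop := ∃ u, IsFacetNormal P F u

/-- `P` is simplicial: every facet has exactly `d` vertices. -/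
def IsSimplicial {d : ℕ} (P : Set (Fin d → ℝ)) : Prop :=
  ∀ F, IsFacet P F → (Set.extremePoints ℝ F).ncard = d


lemma dotp_add_l {d : ℕ} (x y z : Fin d → ℝ) : dotp (x + y) z = dotp x z + dotp y z :=
  add_dotProduct x y z
lemma dotp_add_r {d : ℕ} (x y z : Fin d → ℝ) : dotp x (y + z) = dotp x y + dotp x z :=
  dotProduct_add x y z
lemma dotp_smul_l {d : ℕ} (a : ℝ) (x y : Fin d → ℝ) : dotp (a • x) y = a * dotp x y :=
  smul_dotProduct a x y
lemma dotp_smul_r {d : ℕ} (a : ℝ) (x y : Fin d → ℝ) : dotp x (a • y) = a * dotp x y :=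
  dotProduct_smul a x y
lemma dotp_neg_l {d : ℕ} (x y : Fin d → ℝ) : dotp (-x) y = - dotp x y :=
  neg_dotProduct x y
lemma dotp_neg_r {d : ℕ} (x y : Fin d → ℝ) : dotp x (-y) = - dotp x y :=
  dotProduct_neg x y
lemma dotp_sub_l {d : ℕ} (x y z : Fin d → ℝ) : dotp (x - y) z = dotp x z - dotp y z :=
  sub_dotProduct x y z
lemma dotp_zero_l {d : ℕ} (x : Fin d → ℝ) : dotp 0 x = 0 := zero_dotProduct x
lemma dotp_comm' {d : ℕ} (x y : Fin d → ℝ) : dotp x y = dotp y x := dotProduct_comm x y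
lemma dotp_sum_r {d : ℕ} {ι : Type*} (s : Finset ι) (x : Fin d → ℝ) (f : ι → Fin d → ℝ) :
    dotp x (∑ i ∈ s, f i) = ∑ i ∈ s, dotp x (f i) := dotProduct_sum x s f
lemma dotp_sum_l {d : ℕ} {ι : Type*} (s : Finset ι) (x : Fin d → ℝ) (f : ι → Fin d → ℝ) :
    dotp (∑ i ∈ s, f i) x = ∑ i ∈ s, dotp (f i) x := sum_dotProduct s f x

/-- the functional `y ↦ ⟨x,y⟩` -/
def dotL {d : ℕ} (x : Fin d → ℝ) : (Fin d → ℝ) →ₗ[ℝ] ℝ where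
  toFun y := dotp x y
  map_add' := dotp_add_r x
  map_smul' a y := dotp_smul_r a x y

lemma dotL_apply {d : ℕ} (x y : Fin d → ℝ) : dotL x y = dotp x y := rfl

lemma exists_dotp {d : ℕ} (f : (Fin d → ℝ) →ₗ[ℝ] ℝ) : ∃ x, ∀ y, f y = dotp x y := by
  refine ⟨fun i => f (Pi.single i 1), fun y => ?_⟩
  rw [LinearMap.pi_apply_eq_sum_univ f y]
  unfold dotp
  refine Finset.sum_congr rfl fun i _ => ?_
  rw [smul_eq_mul, mul_comm]
  congr 2
  ext j
  simp [Pi.single_apply, eq_comm]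

lemma dual_basis {d : ℕ} (T : Finset (Fin d → ℝ)) (hc : T.card = d)
    (hsp : Submodule.span ℝ (T : Set (Fin d → ℝ)) = ⊤) :
    ∃ es : (Fin d → ℝ) → (Fin d → ℝ),
      (∀ v, v = ∑ e ∈ T, dotp (es e) v • e) ∧
      (∀ e ∈ T, ∀ f ∈ T, dotp (es e) f = if e = f then 1 else 0) := by
  classical
  let b : Module.Basis T ℝ (Fin d → ℝ) := basisOfTopLeSpanOfCardEqFinrank (fun t : T => (t : Fin d → ℝ))
    (by simpa using hsp.ge) (by simp [hc])
  have hb : ∀ t, b t = t := fun t => by simp [b]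
  choose g hg using fun t : T => exists_dotp (b.coord t)
  refine ⟨fun e => if h : e ∈ T then g ⟨e, h⟩ else 0, ?_, ?_⟩
  · intro v
    rw [← Finset.sum_attach]
    conv_lhs => rw [← b.sum_repr v]
    refine Finset.sum_congr rfl fun t _ => ?_
    simp [hb, ← hg]
  · intro e he f hf
    simp only [he, dif_pos]
    rw [← hg]
    have hbf : b ⟨f, hf⟩ = f := hb ⟨f, hf⟩
    have : b.coord ⟨e, he⟩ (b ⟨f, hf⟩) = if e = f then 1 else 0 := by
      simp [Finsupp.single_apply, eq_comm]
    rwa [hbf] at this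

/-- a small multiple -/
lemma small_mult {d : ℕ} (E : Finset (Fin d → ℝ)) (w : Fin d → ℝ) (c : ℝ) (hc : 0 < c) :
    ∃ t : ℝ, 0 < t ∧ ∀ v ∈ E, t * |dotp w v| ≤ c := by
  have h0 : 0 ≤ ∑ v ∈ E, |dotp w v| := Finset.sum_nonneg fun _ _ => abs_nonneg _
  refine ⟨c / (1 + ∑ v ∈ E, |dotp w v|), by positivity, fun v hv => ?_⟩
  have h1 : |dotp w v| ≤ ∑ v ∈ E, |dotp w v| :=
    Finset.single_le_sum (f := fun v => |dotp w v|) (fun _ _ => abs_nonneg _) hv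
  rw [div_mul_eq_mul_div, div_le_iff₀ (by positivity)]
  nlinarith

lemma hull_le {d : ℕ} (W : Set (Fin d → ℝ)) (y : Fin d → ℝ) (c : ℝ)
    (h : ∀ w ∈ W, dotp w y ≤ c) : ∀ x ∈ convexHull ℝ W, dotp x y ≤ c := by
  intro x hx
  have hconv : Convex ℝ {x : Fin d → ℝ | dotp x y ≤ c} := by
    have := convex_halfSpace_le (𝕜 := ℝ) (f := fun x => dotL y x) (dotL y).isLinear c
    simpa [dotL_apply, dotp_comm' y] using this
  exact convexHull_min (fun w hw => h w hw) hconv hx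

lemma neighbor {d : ℕ} (E W : Finset (Fin d → ℝ))
    (h1 : ∀ u ∈ W, ∀ v ∈ E, ∃ n : ℤ, dotp u v = n)
    (h2 : ∀ x, (∀ v ∈ E, dotp x v ≤ 1) ↔ x ∈ convexHull ℝ (W : Set (Fin d → ℝ)))
    (u : Fin d → ℝ) (hu : u ∈ W) (e es : Fin d → ℝ) (heE : e ∈ E) (hee : dotp es e = 1)
    (hes : ∀ f ∈ E, dotp u f = 1 → f ≠ e → dotp es f = 0) :
    ∃ u' ∈ W, u' ≠ u ∧ ∀ f ∈ E, dotp u f = 1 → f ≠ e → dotp u' f = 1 := by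
  have hWle : ∀ w ∈ W, ∀ v ∈ E, dotp w v ≤ 1 := fun w hw => (h2 w).2 (subset_convexHull ℝ _ hw)
  obtain ⟨t, ht, hts⟩ := small_mult E es 1 one_pos
  have hx : u - t • es ∈ convexHull ℝ (W : Set (Fin d → ℝ)) := by
    rw [← h2]
    intro v hv
    rw [dotp_sub_l, dotp_smul_l]
    by_cases hv1 : dotp u v = 1
    · by_cases hve : v = e
      · subst hve; rw [hee]; linarith
      · rw [hes v hv hv1 hve]; linarith
    · obtain ⟨n, hn⟩ := h1 u hu v hv
      have hle := hWle u hu v hv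
      have : dotp u v ≤ 0 := by
        rw [hn] at hle hv1 ⊢
        have a : n ≤ 1 := by exact_mod_cast hle
        have b : n ≠ 1 := by exact_mod_cast hv1
        have : n ≤ 0 := by omega
        exact_mod_cast this
      have h3 := hts v hv
      have h4 := neg_abs_le (dotp es v)
      nlinarith
  rw [Finset.convexHull_eq] at hx
  obtain ⟨m, hm0, hm1, hmx⟩ := hx
  rw [Finset.centerMass_eq_of_sum_1 _ _ hm1] at hmx
  simp only [id] at hmx
  by_contra hcon
  push Not at hcon
  have hz : ∀ w ∈ W, w ≠ u → m w = 0 := by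
    intro w hw hwu
    obtain ⟨f, hf, hf1, hfe, hwf⟩ := hcon w hw hwu
    have hsum : ∑ w ∈ W, m w * (1 - dotp w f) = 0 := by
      have : dotp (u - t • es) f = 1 := by
        rw [dotp_sub_l, dotp_smul_l, hes f hf hf1 hfe, hf1]; ring
      rw [← hmx, dotp_sum_l] at this
      simp only [dotp_smul_l] at this
      simp only [mul_sub, mul_one, Finset.sum_sub_distrib, this, hm1, sub_self]
    rw [Finset.sum_eq_zero_iff_of_nonneg] at hsum
    · rcases mul_eq_zero.1 (hsum w hw) with h | h
      · exact h
      · exact absurd (by linarith) hwf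
    · intro i hi
      exact mul_nonneg (hm0 i hi) (by linarith [hWle i hi f hf])
  rw [Finset.sum_eq_single_of_mem u hu (fun b hb hbu => hz b hb hbu)] at hm1
  rw [Finset.sum_eq_single_of_mem u hu (fun b hb hbu => by rw [hz b hb hbu, zero_smul]), hm1,
    one_smul] at hmx
  have : dotp u e = dotp (u - t • es) e := by rw [← hmx]
  rw [dotp_sub_l, dotp_smul_l, hee] at this
  linarith

lemma zeros_le {d : ℕ} (E W : Finset (Fin d → ℝ))
    (h1 : ∀ u ∈ W, ∀ v ∈ E, ∃ n : ℤ, dotp u v = n)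
    (h2 : ∀ x, (∀ v ∈ E, dotp x v ≤ 1) ↔ x ∈ convexHull ℝ (W : Set (Fin d → ℝ)))
    (h3 : ∀ u ∈ W, (E.filter (fun v => dotp u v = 1)).card = d ∧
      Submodule.span ℝ ((E.filter (fun v => dotp u v = 1) : Finset (Fin d → ℝ)) : Set (Fin d → ℝ)) = ⊤)
    (h4 : (0 : Fin d → ℝ) ∉ E) (u : Fin d → ℝ) (hu : u ∈ W) :
    (E.filter (fun v => dotp u v = 0)).card ≤ d := by
  classical
  have hWle : ∀ w ∈ W, ∀ v ∈ E, dotp w v ≤ 1 := fun w hw => (h2 w).2 (subset_convexHull ℝ _ hw)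
  obtain ⟨hc, hsp⟩ := h3 u hu
  set T := E.filter (fun v => dotp u v = 1) with hT
  obtain ⟨es, hes, hed⟩ := dual_basis T hc hsp
  have hmem : ∀ f, f ∈ T ↔ f ∈ E ∧ dotp u f = 1 := fun f => by simp [hT]
  have hnb : ∀ e ∈ T, ∃ u' ∈ W, u' ≠ u ∧ ∀ f ∈ T, f ≠ e → dotp u' f = 1 := by
    intro e he
    obtain ⟨u', hu', hne, h⟩ := neighbor E W h1 h2 u hu e (es e) ((hmem e).1 he).1
      (by rw [hed e he e he, if_pos rfl])
      (fun f hf hf1 hfe => by rw [hed e he f ((hmem f).2 ⟨hf, hf1⟩), if_neg (Ne.symm hfe)])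
    exact ⟨u', hu', hne, fun f hf hfe => h f ((hmem f).1 hf).1 ((hmem f).1 hf).2 hfe⟩
  choose! nb hnbW hnbne hnb1 using hnb
  have hsub : E.filter (fun v => dotp u v = 0) ⊆
      T.biUnion (fun e => (E.filter (fun v => dotp (nb e) v = 1)) \ T) := by
    intro v hv
    rw [Finset.mem_filter] at hv
    obtain ⟨hvE, hv0⟩ := hv
    have hsum : ∑ e ∈ T, dotp (es e) v = 0 := by
      rw [← hv0]
      conv_rhs => rw [hes v, dotp_sum_r]
      refine Finset.sum_congr rfl fun e he => ?_
      rw [dotp_smul_r, ((hmem e).1 he).2, mul_one]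
    have hneg : ∃ e ∈ T, dotp (es e) v < 0 := by
      by_contra hcon
      push Not at hcon
      rw [Finset.sum_eq_zero_iff_of_nonneg hcon] at hsum
      have : v = 0 := by
        rw [hes v]
        exact Finset.sum_eq_zero fun e he => by rw [hsum e he, zero_smul]
      exact h4 (this ▸ hvE)
    obtain ⟨e, he, hneg⟩ := hneg
    rw [Finset.mem_biUnion]
    refine ⟨e, he, ?_⟩
    rw [Finset.mem_sdiff, Finset.mem_filter, hmem]
    refine ⟨⟨hvE, ?_⟩, fun h => by rw [hv0] at h; exact zero_ne_one h.2⟩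
    -- formula for the neighbouring normal
    have hform : ∀ y, dotp (nb e) y = dotp u y + (dotp (nb e) e - 1) * dotp (es e) y := by
      intro y
      have hA : dotp (nb e) y = ∑ f ∈ T, dotp (es f) y * dotp (nb e) f := by
        conv_lhs => rw [hes y, dotp_sum_r]
        simp only [dotp_smul_r]
      have hB : dotp u y = ∑ f ∈ T, dotp (es f) y := by
        conv_lhs => rw [hes y, dotp_sum_r]
        refine Finset.sum_congr rfl fun f hf => ?_
        rw [dotp_smul_r, ((hmem f).1 hf).2, mul_one]
      rw [hA, hB, ← Finset.add_sum_erase _ _ he, ← Finset.add_sum_erase T (fun f => dotp (es f) y) he]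
      have : ∑ x ∈ T.erase e, dotp (es x) y * dotp (nb e) x = ∑ x ∈ T.erase e, dotp (es x) y := by
        refine Finset.sum_congr rfl fun f hf => ?_
        rw [Finset.mem_erase] at hf
        rw [hnb1 e he f hf.2 hf.1, mul_one]
      rw [this]; ring
    have heE := ((hmem e).1 he).1
    have hlt : dotp (nb e) e < 1 := by
      refine lt_of_le_of_ne (hWle _ (hnbW e he) e heE) fun h => hnbne e he ?_
      have : ∀ y, dotp (nb e) y = dotp u y := fun y => by rw [hform y, h]; ring
      ext i
      have := this (Pi.single i 1)
      simpa [dotp, Pi.single_apply] using this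
    have hpos : 0 < dotp (nb e) v := by
      rw [hform v, hv0]; nlinarith
    obtain ⟨n, hn⟩ := h1 _ (hnbW e he) v hvE
    have hle := hWle _ (hnbW e he) v hvE
    rw [hn] at hpos hle ⊢
    have a : n ≤ 1 := by exact_mod_cast hle
    have b : 0 < n := by exact_mod_cast hpos
    have : n = 1 := by omega
    rw [this]; simp
  refine (Finset.card_le_card hsub).trans ?_
  refine (Finset.card_biUnion_le_card_mul T _ 1 ?_).trans (by rw [hc, mul_one])
  intro e he
  have hc' := (h3 _ (hnbW e he)).1
  have hsub2 : T.erase e ⊆ (E.filter (fun v => dotp (nb e) v = 1)) := by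
    intro f hf
    rw [Finset.mem_erase] at hf
    rw [Finset.mem_filter]
    exact ⟨((hmem f).1 hf.2).1, hnb1 e he f hf.2 hf.1⟩
  calc _ ≤ ((E.filter (fun v => dotp (nb e) v = 1)) \ T.erase e).card :=
        Finset.card_le_card (Finset.sdiff_subset_sdiff le_rfl (Finset.erase_subset _ _))
    _ ≤ 1 := by
      rw [Finset.card_sdiff_of_subset hsub2, Finset.card_erase_of_mem he, hc, hc']
      omega

lemma facet_sum {d : ℕ} (E W : Finset (Fin d → ℝ))
    (h1 : ∀ u ∈ W, ∀ v ∈ E, ∃ n : ℤ, dotp u v = n)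
    (h2 : ∀ x, (∀ v ∈ E, dotp x v ≤ 1) ↔ x ∈ convexHull ℝ (W : Set (Fin d → ℝ)))
    (h3 : ∀ u ∈ W, (E.filter (fun v => dotp u v = 1)).card = d ∧
      Submodule.span ℝ ((E.filter (fun v => dotp u v = 1) : Finset (Fin d → ℝ)) : Set (Fin d → ℝ)) = ⊤)
    (h4 : (0 : Fin d → ℝ) ∉ E) (u : Fin d → ℝ) (hu : u ∈ W) (v₀ : Fin d → ℝ) (hv₀ : v₀ ∈ E) :
    dotp u (∑ v ∈ E, v) ≤ 3 * d - E.card ∧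
    (dotp u v₀ < -1 → dotp u (∑ v ∈ E, v) < 3 * d - E.card) := by
  classical
  have hWle : ∀ w ∈ W, ∀ v ∈ E, dotp w v ≤ 1 := fun w hw => (h2 w).2 (subset_convexHull ℝ _ hw)
  have hz := zeros_le E W h1 h2 h3 h4 u hu
  have hc := (h3 u hu).1
  have hpt : ∀ v ∈ E, dotp u v ≤ 2 * (if dotp u v = 1 then 1 else 0)
      + (if dotp u v = 0 then 1 else 0) - 1 := by
    intro v hv
    obtain ⟨n, hn⟩ := h1 u hu v hv
    have hle := hWle u hu v hv
    split_ifs with ha hb hb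
    · linarith
    · linarith
    · linarith
    · rw [hn] at *
      have a : n ≤ 1 := by exact_mod_cast hle
      have b : n ≠ 1 := by exact_mod_cast ha
      have c : n ≠ 0 := by exact_mod_cast hb
      have : n ≤ -1 := by omega
      have : (n : ℝ) ≤ -1 := by exact_mod_cast this
      linarith
  have hR : ∑ v ∈ E, ((2 : ℝ) * (if dotp u v = 1 then 1 else 0)
      + (if dotp u v = 0 then 1 else 0) - 1) ≤ 3 * d - E.card := by
    rw [Finset.sum_sub_distrib, Finset.sum_add_distrib, ← Finset.mul_sum]
    simp only [Finset.sum_boole, hc, Finset.sum_const, nsmul_eq_mul, mul_one]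
    have : ((E.filter (fun v => dotp u v = 0)).card : ℝ) ≤ d := by exact_mod_cast hz
    linarith
  rw [dotp_sum_r]
  refine ⟨(Finset.sum_le_sum hpt).trans hR, fun h => lt_of_lt_of_le (Finset.sum_lt_sum hpt
    ⟨v₀, hv₀, ?_⟩) hR⟩
  rw [if_neg (by linarith), if_neg (by linarith)]
  linarith

lemma core {d : ℕ} (E W : Finset (Fin d → ℝ))
    (h1 : ∀ u ∈ W, ∀ v ∈ E, ∃ n : ℤ, dotp u v = n)
    (h2 : ∀ x, (∀ v ∈ E, dotp x v ≤ 1) ↔ x ∈ convexHull ℝ (W : Set (Fin d → ℝ)))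
    (h3 : ∀ u ∈ W, (E.filter (fun v => dotp u v = 1)).card = d ∧
      Submodule.span ℝ ((E.filter (fun v => dotp u v = 1) : Finset (Fin d → ℝ)) : Set (Fin d → ℝ)) = ⊤)
    (h4 : (0 : Fin d → ℝ) ∉ E) :
    E.card ≤ 3 * d ∧ (E.card = 3 * d → ∀ u ∈ W, ∀ v ∈ E, -1 ≤ dotp u v) := by
  rcases E.eq_empty_or_nonempty with rfl | ⟨v₀, hv₀⟩
  · simp
  have hS := hull_le (W : Set (Fin d → ℝ)) (∑ v ∈ E, v) (3 * d - E.card)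
    (fun w hw => (facet_sum E W h1 h2 h3 h4 w hw v₀ hv₀).1)
  constructor
  · have := hS 0 ((h2 0).1 fun v _ => by rw [dotp_zero_l]; exact zero_le_one)
    rw [dotp_zero_l] at this
    have : (E.card : ℝ) ≤ 3 * d := by linarith
    exact_mod_cast this
  · intro hE u hu v hv
    by_contra hlt
    push Not at hlt
    have hA := (facet_sum E W h1 h2 h3 h4 u hu v hv).2 hlt
    obtain ⟨t, ht, hts⟩ := small_mult E u 1 one_pos
    have hB := hS (-(t • u)) ((h2 _).1 fun v hv => by
      rw [dotp_neg_l, dotp_smul_l]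
      have := hts v hv
      have := neg_abs_le (dotp u v)
      nlinarith)
    rw [dotp_neg_l, dotp_smul_l] at hB
    rw [hE] at hA hB
    push_cast at hA hB
    nlinarith

lemma poly_extreme {d : ℕ} {P : Set (Fin d → ℝ)} (hP : IsLatticePolytope P) :
    ∃ E : Finset (Fin d → ℝ), (E : Set (Fin d → ℝ)) = Set.extremePoints ℝ P ∧
      (∀ v ∈ E, IsLP v) ∧ P = convexHull ℝ (E : Set (Fin d → ℝ)) := by
  obtain ⟨V, hV, rfl⟩ := hP
  have hsub : Set.extremePoints ℝ (convexHull ℝ (V : Set (Fin d → ℝ))) ⊆ V :=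
    extremePoints_convexHull_subset
  have hfin : (Set.extremePoints ℝ (convexHull ℝ (V : Set (Fin d → ℝ)))).Finite :=
    V.finite_toSet.subset hsub
  refine ⟨hfin.toFinset, by simp, fun v hv => hV v (hsub (by simpa using hv)), ?_⟩
  have := closure_convexHull_extremePoints (V.finite_toSet.isCompact_convexHull ℝ)
    (convex_convexHull ℝ (V : Set (Fin d → ℝ)))
  rw [(hfin.isClosed_convexHull ℝ).closure_eq] at this
  rw [hfin.coe_toFinset, this]

lemma zero_not_extreme {d : ℕ} (hd : 1 ≤ d) {P : Set (Fin d → ℝ)}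
    (h0 : (0 : Fin d → ℝ) ∈ interior P) : (0 : Fin d → ℝ) ∉ Set.extremePoints ℝ P := by
  intro h
  rw [mem_interior_iff_mem_nhds, Metric.mem_nhds_iff] at h0
  obtain ⟨ε, hε, hb⟩ := h0
  let y : Fin d → ℝ := fun _ => ε / 2
  have hy : ‖y‖ < ε := by
    rw [pi_norm_lt_iff hε]
    intro i
    simp only [y, Real.norm_eq_abs]
    rw [abs_of_pos (by linarith)]; linarith
  have hy1 : y ∈ P := hb (by simpa using hy)
  have hy2 : -y ∈ P := hb (by simpa using hy)
  have := h.2 hy1 hy2 ⟨1 / 2, 1 / 2, by norm_num, by norm_num, by norm_num, by simp⟩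
  have := congrFun this ⟨0, hd⟩
  simp only [y, Pi.zero_apply] at this
  linarith

lemma int_dotp {d : ℕ} {x y : Fin d → ℝ} (hx : IsLP x) (hy : IsLP y) :
    ∃ n : ℤ, dotp x y = n := by
  choose a ha using hx
  choose b hb using hy
  exact ⟨∑ i, a i * b i, by simp [dotp, ha, hb]⟩

lemma dual_iff {d : ℕ} (E : Set (Fin d → ℝ)) (x : Fin d → ℝ) :
    (∀ v ∈ E, dotp x v ≤ 1) ↔ x ∈ dualPolytope (convexHull ℝ E) := by
  constructor
  · intro h y hy
    rw [dotp_comm']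
    exact hull_le E x 1 (fun w hw => by rw [dotp_comm']; exact h w hw) y hy
  · intro h v hv
    exact h v (subset_convexHull ℝ _ hv)

lemma span_facet {d : ℕ} (E : Finset (Fin d → ℝ)) (u : Fin d → ℝ)
    (hu : u ∈ Set.extremePoints ℝ {x : Fin d → ℝ | ∀ v ∈ E, dotp x v ≤ 1}) :
    Submodule.span ℝ ((E.filter (fun v => dotp u v = 1) : Finset (Fin d → ℝ)) :
      Set (Fin d → ℝ)) = ⊤ := by
  by_contra hne
  obtain ⟨f, hf0, hf⟩ := Submodule.exists_le_ker_of_lt_top _ (lt_top_iff_ne_top.2 hne)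
  obtain ⟨w, hw⟩ := exists_dotp f
  have hw1 : ∀ v ∈ E, dotp u v = 1 → dotp w v = 0 := by
    intro v hv h1
    rw [← hw]
    exact hf (Submodule.subset_span (by simp [hv, h1]))
  have hsm : ∃ t : ℝ, 0 < t ∧ ∀ v ∈ E, dotp u v + t * |dotp w v| ≤ 1 := by
    have : ∀ A : Finset (Fin d → ℝ), A ⊆ E → ∃ t : ℝ, 0 < t ∧ ∀ v ∈ A, dotp u v + t * |dotp w v| ≤ 1 := by
      classical
      intro A
      induction A using Finset.induction_on with
      | empty => exact fun _ => ⟨1, one_pos, by simp⟩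
      | insert a s ha ih =>
        intro hs
        obtain ⟨t, ht, h⟩ := ih ((Finset.subset_insert _ _).trans hs)
        have haE : a ∈ E := hs (Finset.mem_insert_self _ _)
        by_cases h1 : dotp u a = 1
        · refine ⟨t, ht, fun v hv => ?_⟩
          rcases Finset.mem_insert.1 hv with rfl | hv
          · rw [hw1 v haE h1, h1]; simp
          · exact h v hv
        · have hlt : dotp u a < 1 := lt_of_le_of_ne (hu.1 a haE) h1
          obtain ⟨r, hr, hr'⟩ := small_mult {a} w (1 - dotp u a) (by linarith)
          refine ⟨min t r, lt_min ht hr, fun v hv => ?_⟩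
          rcases Finset.mem_insert.1 hv with rfl | hv
          · have := hr' v (by simp)
            have := mul_le_mul_of_nonneg_right (min_le_right t r) (abs_nonneg (dotp w v))
            linarith
          · have := h v hv
            have := mul_le_mul_of_nonneg_right (min_le_left t r) (abs_nonneg (dotp w v))
            linarith
    exact this E le_rfl
  obtain ⟨t, ht, hts⟩ := hsm
  have hA : u + t • w ∈ {x : Fin d → ℝ | ∀ v ∈ E, dotp x v ≤ 1} := by
    intro v hv
    rw [dotp_add_l, dotp_smul_l]
    have := hts v hv
    nlinarith [le_abs_self (dotp w v)]
  have hB : u - t • w ∈ {x : Fin d → ℝ | ∀ v ∈ E, dotp x v ≤ 1} := by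
    intro v hv
    rw [dotp_sub_l, dotp_smul_l]
    have := hts v hv
    nlinarith [neg_abs_le (dotp w v)]
  have heq := hu.2 hA hB ⟨1 / 2, 1 / 2, by norm_num, by norm_num, by norm_num, by module⟩
  have hw0 : w = 0 := by
    have : t • w = 0 := by simpa using heq
    exact (smul_eq_zero.1 this).resolve_left ht.ne'
  apply hf0
  refine LinearMap.ext fun y => ?_
  simp [hw, hw0, dotp_zero_l]

lemma facet_of_extreme {d : ℕ} (hd : 1 ≤ d) (P : Set (Fin d → ℝ)) (E : Finset (Fin d → ℝ))
    (hE : (E : Set (Fin d → ℝ)) = Set.extremePoints ℝ P) (u : Fin d → ℝ)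
    (hle : ∀ y ∈ P, dotp u y ≤ 1)
    (hsp : Submodule.span ℝ ((E.filter (fun v => dotp u v = 1) : Finset (Fin d → ℝ)) :
      Set (Fin d → ℝ)) = ⊤) (hs : IsSimplicial P) :
    (E.filter (fun v => dotp u v = 1)).card = d := by
  set T := E.filter (fun v => dotp u v = 1) with hT
  have hEP : ∀ v ∈ E, v ∈ P := fun v hv => by
    have : v ∈ Set.extremePoints ℝ P := hE ▸ hv
    exact this.1
  set F : Set (Fin d → ℝ) := {y ∈ P | dotp u y = 1} with hF
  have hTF : (T : Set (Fin d → ℝ)) ⊆ F := by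
    intro v hv
    have hv : v ∈ E ∧ dotp u v = 1 := by simpa [hT] using hv
    exact ⟨hEP v hv.1, hv.2⟩
  have hTne : T.Nonempty := by
    rw [Finset.nonempty_iff_ne_empty]
    intro h
    rw [h] at hsp
    simp only [Finset.coe_empty, Submodule.span_empty] at hsp
    have h1 : Module.finrank ℝ (⊥ : Submodule ℝ (Fin d → ℝ)) = Module.finrank ℝ (⊤ : Submodule ℝ (Fin d → ℝ)) := by
      rw [hsp]
    rw [finrank_bot, finrank_top, Module.finrank_fin_fun] at h1
    omega
  obtain ⟨y₀, hy₀⟩ := hTne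
  have hy₀F : y₀ ∈ F := hTF hy₀
  have hlow : d ≤ 1 + Module.finrank ℝ (vectorSpan ℝ F) := by
    have htop : Submodule.span ℝ {y₀} ⊔ vectorSpan ℝ F = ⊤ := by
      rw [eq_top_iff, ← hsp, Submodule.span_le]
      intro v hv
      have : v = y₀ + (v - y₀) := by abel
      rw [this]
      exact Submodule.add_mem_sup (Submodule.mem_span_singleton_self _)
        (vsub_mem_vectorSpan ℝ (hTF hv) hy₀F)
    have h1 := Submodule.finrank_add_le_finrank_add_finrank (Submodule.span ℝ {y₀}) (vectorSpan ℝ F)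
    rw [htop, finrank_top, Module.finrank_fin_fun] at h1
    have h2 : Module.finrank ℝ (Submodule.span ℝ {y₀}) ≤ 1 := by
      simpa using finrank_span_le_card (R := ℝ) ({y₀} : Set (Fin d → ℝ))
    omega
  have hup : Module.finrank ℝ (vectorSpan ℝ F) < d := by
    have hker : vectorSpan ℝ F ≤ LinearMap.ker (dotL u) := by
      rw [vectorSpan_def, Submodule.span_le]
      rintro _ ⟨a, ha, b, hb, rfl⟩
      simp only [vsub_eq_sub, SetLike.mem_coe, LinearMap.mem_ker, map_sub, dotL_apply]
      rw [ha.2, hb.2, sub_self]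
    have hlt : vectorSpan ℝ F < ⊤ := by
      rw [lt_top_iff_ne_top]
      intro h
      have : y₀ ∈ LinearMap.ker (dotL u) := hker (h ▸ Submodule.mem_top)
      rw [LinearMap.mem_ker, dotL_apply, hy₀F.2] at this
      exact one_ne_zero this
    have := Submodule.finrank_lt hlt.ne
    rwa [Module.finrank_fin_fun] at this
  have hcard := hs F ⟨u, ⟨y₀, hy₀F⟩, hle, rfl, by omega⟩
  have hext : IsExtreme ℝ P F := by
    refine ⟨fun y hy => hy.1, ?_⟩
    rintro x hx y hy z hz ⟨a, b, ha, hb, hab, rfl⟩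
    refine ⟨hx, ?_⟩
    have h1 := hz.2
    rw [dotp_add_r, dotp_smul_r, dotp_smul_r] at h1
    have h2 := hle x hx
    have h3 := hle y hy
    nlinarith
  rw [hext.extremePoints_eq, ← hE] at hcard
  refine Eq.trans ?_ hcard
  rw [← Set.ncard_coe_finset]
  congr 1
  ext v
  simp only [hT, hF, Finset.coe_filter, Set.mem_setOf_eq, Set.mem_inter_iff, Finset.mem_coe]
  exact ⟨fun h => ⟨⟨hEP v h.1, h.2⟩, h.1⟩, fun h => ⟨h.2, h.1.2⟩⟩

lemma sym_of_dual {d : ℕ} (P : Set (Fin d → ℝ)) (hc : Convex ℝ P) (hcl : IsClosed P)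
    (h0 : (0 : Fin d → ℝ) ∈ P) (hsym : ∀ x ∈ dualPolytope P, -x ∈ dualPolytope P) :
    ∀ y ∈ P, -y ∈ P := by
  intro y hy
  by_contra hn
  obtain ⟨f, s, hfs, hs⟩ := geometric_hahn_banach_closed_point hc hcl hn
  have hs0 : 0 < s := by simpa using hfs 0 h0
  obtain ⟨x, hx⟩ := exists_dotp (f : (Fin d → ℝ) →ₗ[ℝ] ℝ)
  have hx' : ∀ z, f z = dotp x z := hx
  have hmem : s⁻¹ • x ∈ dualPolytope P := by
    intro z hz
    rw [dotp_smul_l, ← hx', inv_mul_le_iff₀ hs0, mul_one]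
    exact (hfs z hz).le
  have := hsym _ hmem y hy
  rw [dotp_neg_l, dotp_smul_l, ← mul_neg, ← dotp_neg_r, ← hx', inv_mul_le_iff₀ hs0] at this
  linarith

/-- Casagrande: a `d`-dimensional simplicial reflexive polytope has at most
`3d` vertices if `d` is even, and at most `3d-1` if `d` is odd. -/
theorem stmt2 {d : ℕ} (hd : 1 ≤ d) (P : Set (Fin d → ℝ))
    (hP : IsReflexive P) (hs : IsSimplicial P) :
    (Set.extremePoints ℝ P).ncard ≤ if Even d then 3 * d else 3 * d - 1 := by
  obtain ⟨hPl, h0, hQl⟩ := hP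
  obtain ⟨E, hE, hEL, hPE⟩ := poly_extreme hPl
  obtain ⟨W, hW, hWL, hQW⟩ := poly_extreme hQl
  rw [← hE, Set.ncard_coe_finset]
  have hQE : dualPolytope P = {x : Fin d → ℝ | ∀ v ∈ E, dotp x v ≤ 1} := by
    ext x
    conv_lhs => rw [hPE]
    exact (dual_iff (E : Set (Fin d → ℝ)) x).symm
  have h4 : (0 : Fin d → ℝ) ∉ E := fun h => zero_not_extreme hd h0 (hE ▸ h)
  have h1 : ∀ u ∈ W, ∀ v ∈ E, ∃ n : ℤ, dotp u v = n :=
    fun u hu v hv => int_dotp (hWL u hu) (hEL v hv)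
  have h2 : ∀ x, (∀ v ∈ E, dotp x v ≤ 1) ↔ x ∈ convexHull ℝ (W : Set (Fin d → ℝ)) := by
    intro x
    rw [← hQW, hQE]; rfl
  have h3 : ∀ u ∈ W, (E.filter (fun v => dotp u v = 1)).card = d ∧
      Submodule.span ℝ ((E.filter (fun v => dotp u v = 1) : Finset (Fin d → ℝ)) :
        Set (Fin d → ℝ)) = ⊤ := by
    intro u hu
    have hu' : u ∈ Set.extremePoints ℝ (dualPolytope P) := hW ▸ hu
    have hle : ∀ y ∈ P, dotp u y ≤ 1 := hu'.1
    rw [hQE] at hu'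
    have hsp := span_facet E u hu'
    exact ⟨facet_of_extreme hd P E hE u hle hsp hs, hsp⟩
  obtain ⟨hle, heq⟩ := core E W h1 h2 h3 h4
  split_ifs with hev
  · exact hle
  · by_contra hcon
    have hc : E.card = 3 * d := by omega
    have hm := heq hc
    have hsymQ : ∀ x ∈ dualPolytope P, -x ∈ dualPolytope P := by
      intro x hx
      have hx' : x ∈ convexHull ℝ (W : Set (Fin d → ℝ)) := hQW ▸ hx
      rw [hQE]
      intro v hv
      have := hull_le (W : Set (Fin d → ℝ)) (-v) 1
        (fun w hw => by rw [dotp_neg_r]; linarith [hm w hw v hv]) x hx'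
      rw [dotp_neg_r] at this
      rwa [dotp_neg_l]
    have hPc : Convex ℝ P := by rw [hPE]; exact convex_convexHull ℝ _
    have hPcl : IsClosed P := by rw [hPE]; exact E.finite_toSet.isClosed_convexHull ℝ
    have hsymP := sym_of_dual P hPc hPcl (interior_subset h0) hsymQ
    have hsymE : ∀ v ∈ E, -v ∈ E := by
      intro v hv
      have hv' : v ∈ Set.extremePoints ℝ P := hE ▸ hv
      have : -v ∈ Set.extremePoints ℝ P := by
        refine ⟨hsymP v hv'.1, ?_⟩
        rintro a ha b hb ⟨p, q, hp, hq, hpq, hv2⟩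
        have := hv'.2 (hsymP a ha) (hsymP b hb) ⟨p, q, hp, hq, hpq, by
          rw [smul_neg, smul_neg, ← neg_add, hv2, neg_neg]⟩
        rw [← this, neg_neg]
      rw [← hE] at this
      exact this
    have hev2 : Even E.card := by
      have : ∑ v ∈ E, (1 : ZMod 2) = 0 :=
        Finset.sum_involution (fun v _ => -v) (fun _ _ => by decide)
          (fun v hv _ h => h4 (by
            have : v = 0 := by
              ext i
              have := congrFun h i
              simp only [Pi.neg_apply] at this
              simp only [Pi.zero_apply]
              linarith
            exact this ▸ hv))
          (fun v hv => hsymE v hv) (fun v _ => neg_neg v)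
      rw [Finset.sum_const, nsmul_eq_mul, mul_one] at this
      exact (ZMod.natCast_eq_zero_iff_even).1 this
    rw [hc] at hev2
    rw [Nat.even_mul] at hev2
    rcases hev2 with h | h
    · exact absurd h (by decide)
    · exact hev h
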